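/- (Equation (5) in the proof of Theorem 3: exponential tail bound.) Let G be a symmetric learning algorithm with function stability Δ̄ with respect to removal of a sample, let the point-wise cost c_τ be τ-smooth, assume 0 ≤ ℓ_τ(G_S, z, k) ≤ γ with γ > 0, and let S be drawn i.i.d. of size m from D. Then for every ε > 0: P_S( R(G_S) − R_e(G_S) ≥ 2τΔ̄ + ε ) ≤ exp( −2mε² / ((4m−2)τΔ̄ + γ)² ). -/

import Mathlib

open MeasureTheory
open scoped BigOperators

/-- The sample-wise loss `L(gS, z) = ∑_{k} c(gS(x,k), y_(k))` of a prediction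
function `gS` on a sample `z = (x, y)` of structure complexity `n`. -/
noncomputable def sampleLoss {X : Type*} {n : ℕ} (c : ℝ → ℝ → ℝ)
    (gS : X → Fin n → ℝ) (z : X × (Fin n → ℝ)) : ℝ :=
  ∑ k, c (gS z.1 k) (z.2 k)

/-- The generalization risk `R(gS) = E_{z∼D}[(1/n) L(gS, z)]`. -/
noncomputable def genRisk {X : Type*} [MeasurableSpace X] {n : ℕ}
    (D : Measure (X × (Fin n → ℝ))) (c : ℝ → ℝ → ℝ)
    (gS : X → Fin n → ℝ) : ℝ :=
  ∫ z, (1 / (n : ℝ)) * sampleLoss c gS z ∂D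

/-- The empirical risk `R_e(gS) = (1/(m n)) ∑_{i=1}^m L(gS, z_i)` of a
prediction function `gS` on a training set `S` of size `m`. -/
noncomputable def empRisk {X : Type*} {n m : ℕ} (c : ℝ → ℝ → ℝ)
    (gS : X → Fin n → ℝ) (S : Fin m → X × (Fin n → ℝ)) : ℝ :=
  (1 / ((m : ℝ) * n)) * ∑ i, sampleLoss c gS (S i)

/-!
This is the Bousquet–Elisseeff argument. Replacing one training sample moves every prediction by at
most `2 Δbar`, through the predictor learnt without that sample, hence every loss by at most
`β = 2 τ Δbar`. Two consequences follow. First, since a training sample and a fresh one are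
exchangeable, the mean of `R(G_S) - R_e(G_S)` is at most `β`. Second, one replacement changes
`R(G_S)` by at most `β` and `R_e(G_S)` by at most `((m - 1) β + γ) / m`, so that the gap has
differences bounded by `((2 m - 1) β + γ) / m`, and McDiarmid's inequality controls its upward
deviations from the mean.
-/

/-- The bounded differences property of McDiarmid's inequality: replacing the `i`-th argument
changes the value of `f` by at most `c i`. -/
def HasBoundedDifferences {ι : Type*} [DecidableEq ι] {Z : ι → Type*} (f : (∀ i, Z i) → ℝ)
    (c : ι → ℝ) : Prop :=
  ∀ S i z, |f (Function.update S i z) - f S| ≤ c i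

lemma abs_integral_sub_integral_le {Ω : Type*} [MeasurableSpace Ω] {μ : Measure Ω}
    [IsProbabilityMeasure μ] {f g : Ω → ℝ} {C : ℝ} (hf : Integrable f μ) (hg : Integrable g μ)
    (h : ∀ ω, |f ω - g ω| ≤ C) : |∫ ω, f ω ∂μ - ∫ ω, g ω ∂μ| ≤ C := by
  rw [← integral_sub hf hg]
  simpa using norm_integral_le_of_norm_le_const (μ := μ) (f := fun ω => f ω - g ω)
    (Filter.Eventually.of_forall h)

section SubGaussian

open ProbabilityTheory

lemma hasSubgaussianMGF_of_abs_sub_le {Ω : Type*} [MeasurableSpace Ω] {μ : Measure Ω}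
    [IsProbabilityMeasure μ] {g : Ω → ℝ} {c : ℝ} (hg : Measurable g)
    (hc : ∀ ω ω', |g ω - g ω'| ≤ c) :
    HasSubgaussianMGF (fun ω => g ω - ∫ ω', g ω' ∂μ) ((‖c‖₊ / 2) ^ 2) μ := by
  have : Nonempty Ω := nonempty_of_isProbabilityMeasure μ
  have sub_le (ω ω' : Ω) : g ω - c ≤ g ω' := by linarith [le_of_abs_le (hc ω ω')]
  have hbdd : BddBelow (Set.range g) :=
    ⟨g (Classical.arbitrary Ω) - c, Set.forall_mem_range.2 (sub_le _)⟩
  have hmem (ω : Ω) : g ω ∈ Set.Icc (⨅ ω', g ω') ((⨅ ω', g ω') + c) :=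
    ⟨ciInf_le hbdd ω, sub_le_iff_le_add.1 (le_ciInf (sub_le ω))⟩
  simpa using hasSubgaussianMGF_of_mem_Icc hg.aemeasurable (Filter.Eventually.of_forall hmem)

section Prod

variable {Ω Ω' : Type*} [MeasurableSpace Ω'] {ν : Measure Ω'} {X : Ω → ℝ} {Y : Ω → Ω' → ℝ}
  {cX cY : NNReal}

lemma integral_exp_mul_add_right_le (hY : ∀ ω, HasSubgaussianMGF (Y ω) cY ν) (t : ℝ) (ω : Ω) :
    ∫ ω', Real.exp (t * (X ω + Y ω ω')) ∂ν ≤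
      Real.exp (t * X ω) * Real.exp (cY * t ^ 2 / 2) := by
  simp_rw [mul_add, Real.exp_add, integral_const_mul]
  gcongr
  exact (hY ω).mgf_le t

variable [MeasurableSpace Ω] {μ : Measure Ω} [SFinite ν]

lemma integrable_exp_mul_add_prod [SFinite μ] (hX : HasSubgaussianMGF X cX μ)
    (hY : ∀ ω, HasSubgaussianMGF (Y ω) cY ν) (hYm : Measurable (Function.uncurry Y)) (t : ℝ) :
    Integrable (fun p : Ω × Ω' => Real.exp (t * (X p.1 + Y p.1 p.2))) (μ.prod ν) := by
  have hmeas : AEStronglyMeasurable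
      (fun p : Ω × Ω' => Real.exp (t * (X p.1 + Y p.1 p.2))) (μ.prod ν) :=
    ((hX.aemeasurable.comp_fst.add hYm.aemeasurable).const_mul t).exp.aestronglyMeasurable
  refine (integrable_prod_iff hmeas).2 ⟨Filter.Eventually.of_forall fun ω => ?_, ?_⟩
  · simp_rw [mul_add, Real.exp_add]
    exact ((hY ω).integrable_exp_mul t).const_mul _
  · refine ((hX.integrable_exp_mul t).mul_const (Real.exp (cY * t ^ 2 / 2))).mono'
      hmeas.norm.integral_prod_right' (Filter.Eventually.of_forall fun ω => ?_)
    simp_rw [Real.norm_eq_abs, Real.abs_exp]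
    rw [abs_of_nonneg (integral_nonneg fun _ => Real.exp_nonneg _)]
    exact integral_exp_mul_add_right_le hY t ω

lemma hasSubgaussianMGF_add_prod [SFinite μ] (hX : HasSubgaussianMGF X cX μ)
    (hY : ∀ ω, HasSubgaussianMGF (Y ω) cY ν) (hYm : Measurable (Function.uncurry Y)) :
    HasSubgaussianMGF (fun p : Ω × Ω' => X p.1 + Y p.1 p.2) (cX + cY) (μ.prod ν) := by
  refine ⟨integrable_exp_mul_add_prod hX hY hYm, fun t => ?_⟩
  calc mgf (fun p : Ω × Ω' => X p.1 + Y p.1 p.2) (μ.prod ν) t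
      = ∫ ω, ∫ ω', Real.exp (t * (X ω + Y ω ω')) ∂ν ∂μ :=
        integral_prod _ (integrable_exp_mul_add_prod hX hY hYm t)
    _ ≤ ∫ ω, Real.exp (t * X ω) * Real.exp (cY * t ^ 2 / 2) ∂μ :=
        integral_mono (integrable_exp_mul_add_prod hX hY hYm t).integral_prod_left
          ((hX.integrable_exp_mul t).mul_const _) (integral_exp_mul_add_right_le hY t)
    _ = mgf X μ t * Real.exp (cY * t ^ 2 / 2) := integral_mul_const _ _
    _ ≤ Real.exp (cX * t ^ 2 / 2) * Real.exp (cY * t ^ 2 / 2) := by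
        gcongr
        exact hX.mgf_le t
    _ = Real.exp ((cX + cY : NNReal) * t ^ 2 / 2) := by
        rw [← Real.exp_add, NNReal.coe_add]
        ring_nf

end Prod

end SubGaussian

namespace HasBoundedDifferences

open ProbabilityTheory

lemma abs_sub_le {ι : Type*} [Fintype ι] [DecidableEq ι] {Z : ι → Type*} {f : (∀ i, Z i) → ℝ}
    {c : ι → ℝ} (hf : HasBoundedDifferences f c) (S T : ∀ i, Z i) : |f S - f T| ≤ ∑ i, c i := by
  have piecewise_le (s : Finset ι) : |f (s.piecewise S T) - f T| ≤ ∑ i ∈ s, c i := by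
    induction s using Finset.induction_on with
    | empty => simp
    | insert i s hi ih =>
      rw [Finset.piecewise_insert, Finset.sum_insert hi]
      exact (_root_.abs_sub_le _ (f (s.piecewise S T)) _).trans (add_le_add (hf _ _ _) ih)
  simpa only [Finset.piecewise_univ] using piecewise_le Finset.univ

lemma integrable {ι : Type*} [Finite ι] [DecidableEq ι] {Z : ι → Type*}
    [∀ i, MeasurableSpace (Z i)] {P : Measure (∀ i, Z i)} [IsFiniteMeasure P]
    {f : (∀ i, Z i) → ℝ} {c : ι → ℝ} (hf : HasBoundedDifferences f c) (hfm : Measurable f) :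
    Integrable f P := by
  cases nonempty_fintype ι
  rcases isEmpty_or_nonempty (∀ i, Z i) with _ | ⟨⟨T⟩⟩
  · exact Integrable.of_isEmpty
  · refine Integrable.of_mem_Icc (f T - ∑ i, c i) (f T + ∑ i, c i) hfm.aemeasurable
      (Filter.Eventually.of_forall fun S => ?_)
    obtain ⟨lower, upper⟩ := abs_le.1 (hf.abs_sub_le S T)
    constructor <;> linarith

section Cons

variable {n : ℕ} {Z : Fin (n + 1) → Type*} {f : (∀ i, Z i) → ℝ} {c : Fin (n + 1) → ℝ}

lemma comp_cons (hf : HasBoundedDifferences f c) (z : Z 0) :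
    HasBoundedDifferences (fun S => f (Fin.cons z S)) (fun i => c i.succ) := fun S i w => by
  simpa only [Fin.cons_update] using hf (Fin.cons z S) i.succ w

lemma abs_cons_sub_cons_le (hf : HasBoundedDifferences f c) (z w : Z 0)
    (S : ∀ i : Fin n, Z i.succ) : |f (Fin.cons z S) - f (Fin.cons w S)| ≤ c 0 := by
  simpa only [Fin.update_cons_zero] using hf (Fin.cons w S) 0 z

end Cons

end HasBoundedDifferences

section McDiarmid

open ProbabilityTheory

lemma measurable_fin_cons {n : ℕ} {Z : Fin (n + 1) → Type*} [∀ i, MeasurableSpace (Z i)] :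
    Measurable fun p : Z 0 × (∀ i : Fin n, Z i.succ) => (Fin.cons p.1 p.2 : ∀ i, Z i) :=
  measurable_pi_lambda _ <| Fin.cases measurable_fst
    fun i => (measurable_pi_apply i).comp measurable_snd

lemma measurePreserving_head_tail {n : ℕ} {Z : Fin (n + 1) → Type*}
    [∀ i, MeasurableSpace (Z i)] (μ : ∀ i, Measure (Z i)) [∀ i, SigmaFinite (μ i)] :
    MeasurePreserving (fun S : ∀ i, Z i => (S 0, Fin.tail S)) (Measure.pi μ)
      ((μ 0).prod (Measure.pi fun i : Fin n => μ i.succ)) :=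
  measurePreserving_piFinSuccAbove μ 0

lemma integral_pi_eq_integral_cons {n : ℕ} {Z : Fin (n + 1) → Type*}
    [∀ i, MeasurableSpace (Z i)] {μ : ∀ i, Measure (Z i)} [∀ i, SigmaFinite (μ i)]
    {f : (∀ i, Z i) → ℝ} (hfm : Measurable f) (hf : Integrable f (Measure.pi μ)) :
    ∫ S, f S ∂Measure.pi μ =
      ∫ z, ∫ S, f (Fin.cons z S) ∂Measure.pi (fun i : Fin n => μ i.succ) ∂μ 0 := by
  have hmp := measurePreserving_head_tail μ
  have hfc : Measurable fun p : Z 0 × (∀ i : Fin n, Z i.succ) => f (Fin.cons p.1 p.2) :=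
    hfm.comp measurable_fin_cons
  have hcomp : (fun p : Z 0 × (∀ i : Fin n, Z i.succ) => f (Fin.cons p.1 p.2)) ∘
      (fun S : ∀ i, Z i => (S 0, Fin.tail S)) = f :=
    funext fun S => congrArg f (Fin.cons_self_tail S)
  rw [← integral_prod _ ((hmp.integrable_comp hfc.aestronglyMeasurable).1 (by rwa [hcomp])),
    ← hmp.map_eq, integral_map hmp.aemeasurable hfc.aestronglyMeasurable]
  exact congrArg (fun g => ∫ S, g S ∂Measure.pi μ) hcomp.symm

/-- Conditioning on the first coordinate `z` splits `f - E f` into the centred conditional mean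
of `f` given `z`, to which Hoeffding's lemma applies, and the fluctuation around that mean, a
centred function with bounded differences of the remaining coordinates. -/
theorem HasBoundedDifferences.hasSubgaussianMGF {n : ℕ} {Z : Fin n → Type*}
    [∀ i, MeasurableSpace (Z i)] {μ : ∀ i, Measure (Z i)} [∀ i, IsProbabilityMeasure (μ i)]
    {f : (∀ i, Z i) → ℝ} {c : Fin n → ℝ} (hf : HasBoundedDifferences f c) (hfm : Measurable f) :
    HasSubgaussianMGF (fun S => f S - ∫ T, f T ∂Measure.pi μ) (∑ i, (‖c i‖₊ / 2) ^ 2)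
      (Measure.pi μ) := by
  induction n with
  | zero =>
    have hconst : f = fun _ => f default := funext fun S => congrArg f (Subsingleton.elim _ _)
    rw [hconst]
    simp
  | succ n ih =>
    set P := Measure.pi fun i : Fin n => μ i.succ
    set g : Z 0 → ℝ := fun z => ∫ S, f (Fin.cons z S) ∂P
    have hfc : Measurable fun p : Z 0 × (∀ i : Fin n, Z i.succ) => f (Fin.cons p.1 p.2) :=
      hfm.comp measurable_fin_cons
    have hfz (z : Z 0) : Measurable fun S : ∀ i : Fin n, Z i.succ => f (Fin.cons z S) :=
      hfc.comp measurable_prodMk_left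
    have hg : Measurable g := hfc.stronglyMeasurable.integral_prod_right.measurable
    have hmean : ∫ z, g z ∂μ 0 = ∫ S, f S ∂Measure.pi μ :=
      (integral_pi_eq_integral_cons hfm (hf.integrable hfm)).symm
    have hhead := hasSubgaussianMGF_of_abs_sub_le (μ := μ 0) hg fun z w =>
      abs_integral_sub_integral_le ((hf.comp_cons z).integrable (hfz z))
        ((hf.comp_cons w).integrable (hfz w)) (hf.abs_cons_sub_cons_le z w)
    have htail (z : Z 0) := ih (μ := fun i => μ i.succ) (hf.comp_cons z) (hfz z)
    have hprod := hasSubgaussianMGF_add_prod hhead htail (hfc.sub (hg.comp measurable_fst))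
    have hmp := measurePreserving_head_tail μ
    rw [← hmp.map_eq] at hprod
    rw [Fin.sum_univ_succ]
    refine (hprod.of_map hmp.aemeasurable).congr (Filter.Eventually.of_forall fun S => ?_)
    simp only [Function.comp_apply, Fin.cons_self_tail, hmean, g, P]
    ring

theorem HasBoundedDifferences.measureReal_ge_le {n : ℕ} {Z : Fin n → Type*}
    [∀ i, MeasurableSpace (Z i)] {μ : ∀ i, Measure (Z i)} [∀ i, IsProbabilityMeasure (μ i)]
    {f : (∀ i, Z i) → ℝ} {c : Fin n → ℝ} (hf : HasBoundedDifferences f c) (hfm : Measurable f)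
    {ε : ℝ} (hε : 0 ≤ ε) :
    (Measure.pi μ).real {S | ε ≤ f S - ∫ T, f T ∂Measure.pi μ} ≤
      Real.exp (-(2 * ε ^ 2) / ∑ i, c i ^ 2) := by
  refine ((hf.hasSubgaussianMGF hfm).measure_ge_le hε).trans_eq (congrArg Real.exp ?_)
  have hsum : (∑ i, (‖c i‖₊ / 2) ^ 2 : NNReal) = (∑ i, c i ^ 2) / 4 := by
    push_cast
    simp only [Real.norm_eq_abs, div_pow, sq_abs, Finset.sum_div]
    norm_num
  rw [hsum]
  field_simp
  norm_num

end McDiarmid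

lemma measurePreserving_update {ι : Type*} [Fintype ι] [DecidableEq ι] {Z : ι → Type*}
    [∀ i, MeasurableSpace (Z i)] (μ : ∀ i, Measure (Z i)) [∀ i, SigmaFinite (μ i)] (j : ι)
    [IsProbabilityMeasure (μ j)] :
    MeasurePreserving (fun p : (∀ i, Z i) × Z j => Function.update p.1 j p.2)
      ((Measure.pi μ).prod (μ j)) (Measure.pi μ) := by
  refine ⟨measurable_update', (Measure.pi_eq fun s hs => ?_).symm⟩
  have hpre : (fun p : (∀ i, Z i) × Z j => Function.update p.1 j p.2) ⁻¹' Set.univ.pi s =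
      Set.univ.pi (Function.update s j Set.univ) ×ˢ s j := by
    ext ⟨S, z⟩
    simp only [Set.mem_preimage, Set.mem_prod, Set.mem_univ_pi,
      Function.forall_update_iff S fun i x => x ∈ s i,
      Function.forall_update_iff s fun i t => S i ∈ t, Set.mem_univ, true_and, and_comm]
  rw [Measure.map_apply measurable_update' (MeasurableSet.univ_pi hs), hpre, Measure.prod_prod,
    Measure.pi_pi]
  simp only [Function.apply_update fun i => μ i, measure_univ]
  rw [Finset.prod_update_of_mem (Finset.mem_univ j), one_mul, mul_comm]
  exact (Finset.prod_eq_mul_prod_sdiff_singleton_of_mem (Finset.mem_univ j)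
    fun i => μ i (s i)).symm

/-- Uniform stability under replacement of one training sample: `ℓ S z` is the loss on `z` of the
predictor learnt from the training set `S`, and changing one entry of `S` changes this loss by at
most `β` at every `z`. -/
def IsUniformlyStable {Z : Type*} {m : ℕ} (ℓ : (Fin m → Z) → Z → ℝ) (β : ℝ) : Prop :=
  ∀ S i z w, |ℓ (Function.update S i z) w - ℓ S w| ≤ β

/-- The expected loss on a fresh sample minus the average loss on the training set; `ℓ S z` is
the loss on `z` of the predictor learnt from `S`. -/
noncomputable def generalizationGap {Z : Type*} [MeasurableSpace Z] {m : ℕ} (μ : Measure Z)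
    (ℓ : (Fin m → Z) → Z → ℝ) (S : Fin m → Z) : ℝ :=
  ∫ z, ℓ S z ∂μ - (∑ i, ℓ S (S i)) / m

namespace IsUniformlyStable

variable {Z : Type*} {m : ℕ} {ℓ : (Fin m → Z) → Z → ℝ} {β M : ℝ}

lemma abs_sum_update_sub_sum_le (hℓ : IsUniformlyStable ℓ β) (hM : ∀ S z, ℓ S z ∈ Set.Icc 0 M)
    (S : Fin m → Z) (i : Fin m) (z : Z) :
    |∑ j, ℓ (Function.update S i z) (Function.update S i z j) - ∑ j, ℓ S (S j)| ≤
      M + (m - 1) * β := by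
  have replaced : |ℓ (Function.update S i z) (Function.update S i z i) - ℓ S (S i)| ≤ M :=
    abs_sub_le_of_nonneg_of_le (hM _ _).1 (hM _ _).2 (hM _ _).1 (hM _ _).2
  have kept (j : Fin m) (hj : j ∈ Finset.univ.erase i) :
      |ℓ (Function.update S i z) (Function.update S i z j) - ℓ S (S j)| ≤ β := by
    rw [Function.update_of_ne (Finset.ne_of_mem_erase hj)]
    exact hℓ S i z (S j)
  have card_kept : ((Finset.univ.erase i).card : ℝ) = m - 1 := by
    rw [Finset.card_erase_of_mem (Finset.mem_univ i), Finset.card_univ, Fintype.card_fin,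
      Nat.cast_pred i.pos]
  calc |∑ j, ℓ (Function.update S i z) (Function.update S i z j) - ∑ j, ℓ S (S j)|
      ≤ ∑ j, |ℓ (Function.update S i z) (Function.update S i z j) - ℓ S (S j)| := by
        rw [← Finset.sum_sub_distrib]
        exact Finset.abs_sum_le_sum_abs _ _
    _ = |ℓ (Function.update S i z) (Function.update S i z i) - ℓ S (S i)| +
        ∑ j ∈ Finset.univ.erase i,
          |ℓ (Function.update S i z) (Function.update S i z j) - ℓ S (S j)| :=
        (Finset.add_sum_erase _ _ (Finset.mem_univ i)).symm
    _ ≤ M + (Finset.univ.erase i).card • β :=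
        add_le_add replaced (Finset.sum_le_card_nsmul _ _ _ kept)
    _ = M + (m - 1) * β := by rw [nsmul_eq_mul, card_kept]

variable [MeasurableSpace Z] {μ : Measure Z} [IsProbabilityMeasure μ]

lemma hasBoundedDifferences_generalizationGap (hℓ : IsUniformlyStable ℓ β)
    (hM : ∀ S z, ℓ S z ∈ Set.Icc 0 M) (hint : ∀ S, Integrable (ℓ S) μ) :
    HasBoundedDifferences (generalizationGap μ ℓ) fun _ => ((2 * m - 1) * β + M) / m := by
  intro S i z
  have hm : (0 : ℝ) < m := Nat.cast_pos.2 i.pos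
  have hrisk := abs_integral_sub_integral_le (hint (Function.update S i z)) (hint S) (hℓ S i z)
  have hsum := hℓ.abs_sum_update_sub_sum_le hM S i z
  calc |generalizationGap μ ℓ (Function.update S i z) - generalizationGap μ ℓ S|
      = |(∫ w, ℓ (Function.update S i z) w ∂μ - ∫ w, ℓ S w ∂μ) -
          (∑ j, ℓ (Function.update S i z) (Function.update S i z j) - ∑ j, ℓ S (S j)) / m| := by
        unfold generalizationGap
        ring_nf
    _ ≤ β + (M + (m - 1) * β) / m := by
        refine (abs_sub _ _).trans (add_le_add hrisk ?_)
        rw [abs_div, abs_of_pos hm]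
        gcongr
    _ = ((2 * m - 1) * β + M) / m := by
        field_simp
        ring

/-- The pair `(S, S j)` has the law of `(update S j z, z)` for an independent fresh sample `z`, so
testing on a training sample instead of a fresh one costs a single replacement. -/
lemma integral_sub_integral_apply_le (hℓ : IsUniformlyStable ℓ β)
    (hfresh : Integrable (fun p : (Fin m → Z) × Z => ℓ p.1 p.2)
      ((Measure.pi fun _ : Fin m => μ).prod μ)) {j : Fin m}
    (htrain : Integrable (fun S => ℓ S (S j)) (Measure.pi fun _ : Fin m => μ)) :
    ∫ p : (Fin m → Z) × Z, ℓ p.1 p.2 ∂(Measure.pi fun _ : Fin m => μ).prod μ -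
      ∫ S, ℓ S (S j) ∂Measure.pi (fun _ : Fin m => μ) ≤ β := by
  have hmp := measurePreserving_update (fun _ : Fin m => μ) j
  have htrain_comp := (hmp.integrable_comp htrain.aestronglyMeasurable).2 htrain
  have htrain_eq : ∫ S, ℓ S (S j) ∂Measure.pi (fun _ : Fin m => μ) =
      ∫ p, ((fun S => ℓ S (S j)) ∘ fun p : (Fin m → Z) × Z => Function.update p.1 j p.2) p
        ∂(Measure.pi fun _ : Fin m => μ).prod μ := by
    conv_lhs => rw [← hmp.map_eq]
    exact integral_map hmp.aemeasurable (by rw [hmp.map_eq]; exact htrain.aestronglyMeasurable)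
  rw [htrain_eq]
  refine le_of_abs_le (abs_integral_sub_integral_le hfresh htrain_comp fun p => ?_)
  rw [abs_sub_comm, Function.comp_apply, Function.update_self]
  exact hℓ p.1 j p.2 p.2

lemma integral_generalizationGap_le (hm : 0 < m) (hℓ : IsUniformlyStable ℓ β)
    (hfresh : Integrable (fun p : (Fin m → Z) × Z => ℓ p.1 p.2)
      ((Measure.pi fun _ : Fin m => μ).prod μ))
    (htrain : ∀ j, Integrable (fun S => ℓ S (S j)) (Measure.pi fun _ : Fin m => μ)) :
    ∫ S, generalizationGap μ ℓ S ∂Measure.pi (fun _ : Fin m => μ) ≤ β := by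
  have hsum : Integrable (fun S => (∑ j, ℓ S (S j)) / m) (Measure.pi fun _ : Fin m => μ) :=
    (integrable_finsetSum _ fun j _ => htrain j).div_const _
  have hj (j : Fin m) := hℓ.integral_sub_integral_apply_le hfresh (htrain j)
  unfold generalizationGap
  rw [integral_sub hfresh.integral_prod_left hsum, ← integral_prod _ hfresh, integral_div,
    integral_finsetSum _ fun j _ => htrain j, sub_le_comm, le_div_iff₀ (Nat.cast_pos.2 hm)]
  simpa [mul_comm] using
    Finset.card_nsmul_le_sum Finset.univ _ _ fun j _ => sub_le_comm.1 (hj j)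

theorem measureReal_generalizationGap_ge_le (hm : 0 < m) (hℓ : IsUniformlyStable ℓ β)
    (hM : ∀ S z, ℓ S z ∈ Set.Icc 0 M) (hint : ∀ S, Integrable (ℓ S) μ)
    (hfresh : Integrable (fun p : (Fin m → Z) × Z => ℓ p.1 p.2)
      ((Measure.pi fun _ : Fin m => μ).prod μ))
    (htrain : ∀ j, Integrable (fun S => ℓ S (S j)) (Measure.pi fun _ : Fin m => μ))
    (hmeas : Measurable (generalizationGap μ ℓ)) {ε : ℝ} (hε : 0 ≤ ε) :
    (Measure.pi fun _ : Fin m => μ).real {S | β + ε ≤ generalizationGap μ ℓ S} ≤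
      Real.exp (-(2 * m * ε ^ 2) / ((2 * m - 1) * β + M) ^ 2) := by
  have hmean := hℓ.integral_generalizationGap_le hm hfresh htrain
  calc (Measure.pi fun _ : Fin m => μ).real {S | β + ε ≤ generalizationGap μ ℓ S}
      ≤ (Measure.pi fun _ : Fin m => μ).real {S | ε ≤ generalizationGap μ ℓ S -
          ∫ T, generalizationGap μ ℓ T ∂Measure.pi (fun _ : Fin m => μ)} :=
        measureReal_mono fun S (hS : β + ε ≤ generalizationGap μ ℓ S) => by
          rw [Set.mem_ofPred_eq]
          linarith
    _ ≤ Real.exp (-(2 * ε ^ 2) / ∑ _ : Fin m, (((2 * m - 1) * β + M) / m) ^ 2) :=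
        (hℓ.hasBoundedDifferences_generalizationGap hM hint).measureReal_ge_le hmeas hε
    _ = Real.exp (-(2 * m * ε ^ 2) / ((2 * m - 1) * β + M) ^ 2) := by
        rw [Finset.sum_const, Finset.card_univ, Fintype.card_fin, nsmul_eq_mul]
        field_simp

end IsUniformlyStable

section StructuredPrediction

variable {X : Type*} {n m : ℕ}

/-- The per-position average loss `(1/n) ∑ₖ c(g(x,k), y₍ₖ₎)` of a prediction function `g` on a
sample `z = (x, y)`; the risk and the empirical risk are its averages over `D` and over `S`. -/
noncomputable def meanLoss (c : ℝ → ℝ → ℝ) (g : X → Fin n → ℝ) (z : X × (Fin n → ℝ)) : ℝ :=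
  1 / n * sampleLoss c g z

lemma generalizationGap_meanLoss [MeasurableSpace X] (D : Measure (X × (Fin n → ℝ)))
    (c : ℝ → ℝ → ℝ) (G : (Fin m → X × (Fin n → ℝ)) → X → Fin n → ℝ)
    (S : Fin m → X × (Fin n → ℝ)) :
    generalizationGap D (fun S => meanLoss c (G S)) S = genRisk D c (G S) - empRisk c (G S) S := by
  unfold generalizationGap genRisk empRisk meanLoss
  rw [← Finset.mul_sum]
  ring

lemma meanLoss_eq_sum_div (c : ℝ → ℝ → ℝ) (g : X → Fin n → ℝ) (z : X × (Fin n → ℝ)) :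
    meanLoss c g z = (∑ k, c (g z.1 k) (z.2 k)) / n := one_div_mul_eq_div _ _

lemma meanLoss_mem_Icc (hn : 0 < n) {c : ℝ → ℝ → ℝ} {g : X → Fin n → ℝ} {z : X × (Fin n → ℝ)}
    {γ : ℝ} (h : ∀ k, 0 ≤ c (g z.1 k) (z.2 k) ∧ c (g z.1 k) (z.2 k) ≤ γ) :
    meanLoss c g z ∈ Set.Icc 0 γ := by
  rw [meanLoss_eq_sum_div]
  refine ⟨div_nonneg (Finset.sum_nonneg fun k _ => (h k).1) n.cast_nonneg, ?_⟩
  rw [div_le_iff₀ (Nat.cast_pos.2 hn), mul_comm]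
  simpa using Finset.sum_le_card_nsmul Finset.univ _ γ fun k _ => (h k).2

lemma abs_meanLoss_sub_le (hn : 0 < n) {c : ℝ → ℝ → ℝ} {g g' : X → Fin n → ℝ}
    {z : X × (Fin n → ℝ)} {β : ℝ}
    (h : ∀ k, |c (g z.1 k) (z.2 k) - c (g' z.1 k) (z.2 k)| ≤ β) :
    |meanLoss c g z - meanLoss c g' z| ≤ β := by
  rw [meanLoss_eq_sum_div, meanLoss_eq_sum_div, ← sub_div, ← Finset.sum_sub_distrib, abs_div,
    Nat.abs_cast, div_le_iff₀ (Nat.cast_pos.2 hn), mul_comm]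
  refine (Finset.abs_sum_le_sum_abs _ _).trans ?_
  simpa using Finset.sum_le_card_nsmul Finset.univ _ β fun k _ => h k

lemma abs_update_sub_le_of_removal {ι Z K : Type*} [DecidableEq ι] {G : (ι → Z) → X → K → ℝ}
    {Gminus : (ι → Z) → ι → X → K → ℝ} {Δ : ℝ}
    (hGminus : ∀ S i z, Gminus (Function.update S i z) i = Gminus S i)
    (hstab : ∀ S i x k, |G S x k - Gminus S i x k| ≤ Δ)
    (S : ι → Z) (i : ι) (z : Z) (x : X) (k : K) :
    |G (Function.update S i z) x k - G S x k| ≤ 2 * Δ := by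
  have hnew := hstab (Function.update S i z) i x k
  have hold := hstab S i x k
  rw [hGminus] at hnew
  rw [abs_sub_comm] at hold
  linarith [abs_sub_le (G (Function.update S i z) x k) (Gminus S i x k) (G S x k)]

lemma isUniformlyStable_meanLoss (hn : 0 < n) {c : ℝ → ℝ → ℝ} {τ Δ : ℝ}
    {G : (Fin m → X × (Fin n → ℝ)) → X → Fin n → ℝ}
    {Gminus : (Fin m → X × (Fin n → ℝ)) → Fin m → X → Fin n → ℝ}
    (hGminus : ∀ S i z, Gminus (Function.update S i z) i = Gminus S i)
    (hstab : ∀ S i x k, |G S x k - Gminus S i x k| ≤ Δ)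
    (hsmooth : ∀ y₁ y₂ ystar, |c y₁ ystar - c y₂ ystar| ≤ τ * |y₁ - y₂|) :
    IsUniformlyStable (fun S => meanLoss c (G S)) (2 * τ * Δ) := by
  have hτ : 0 ≤ τ := by simpa using (abs_nonneg _).trans (hsmooth 1 0 0)
  refine fun S i z w => abs_meanLoss_sub_le hn fun k => ?_
  calc |c (G (Function.update S i z) w.1 k) (w.2 k) - c (G S w.1 k) (w.2 k)|
      ≤ τ * |G (Function.update S i z) w.1 k - G S w.1 k| := hsmooth _ _ _
    _ ≤ τ * (2 * Δ) := by
        gcongr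
        exact abs_update_sub_le_of_removal hGminus hstab S i z w.1 k
    _ = 2 * τ * Δ := by ring

end StructuredPrediction

theorem generalization_gap_tail_bound_general
    {X : Type*} [MeasurableSpace X] {n m : ℕ} (hn : 0 < n) (hm : 0 < m)
    (D : Measure (X × (Fin n → ℝ))) [IsProbabilityMeasure D]
    (G : (Fin m → X × (Fin n → ℝ)) → X → Fin n → ℝ)
    (Gminus : (Fin m → X × (Fin n → ℝ)) → Fin m → X → Fin n → ℝ)
    (c : ℝ → ℝ → ℝ) (τ Δ γ : ℝ)
    (hGminus : ∀ S i z, Gminus (Function.update S i z) i = Gminus S i)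
    (hstab : ∀ S i x k, |G S x k - Gminus S i x k| ≤ Δ)
    (hsmooth : ∀ y₁ y₂ ystar, |c y₁ ystar - c y₂ ystar| ≤ τ * |y₁ - y₂|)
    (hbound : ∀ S (z : X × (Fin n → ℝ)) k,
      0 ≤ c (G S z.1 k) (z.2 k) ∧ c (G S z.1 k) (z.2 k) ≤ γ)
    (hint : ∀ S, Integrable (fun z => sampleLoss c (G S) z) D)
    (hfresh : Integrable
      (fun p : (Fin m → X × (Fin n → ℝ)) × (X × (Fin n → ℝ)) => sampleLoss c (G p.1) p.2)
      ((Measure.pi fun _ : Fin m => D).prod D))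
    (htrain : ∀ j, Integrable (fun S => sampleLoss c (G S) (S j))
      (Measure.pi fun _ : Fin m => D))
    (hmeas : Measurable fun S => genRisk D c (G S) - empRisk c (G S) S)
    {ε : ℝ} (hε : 0 ≤ ε) :
    (Measure.pi fun _ : Fin m => D)
        {S | 2 * τ * Δ + ε ≤ genRisk D c (G S) - empRisk c (G S) S}
      ≤ ENNReal.ofReal
          (Real.exp (-(2 * (m : ℝ) * ε ^ 2) / ((4 * (m : ℝ) - 2) * τ * Δ + γ) ^ 2)) := by
  have hstable := isUniformlyStable_meanLoss hn hGminus hstab hsmooth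
  have hgap := funext (generalizationGap_meanLoss D c G)
  have htail := hstable.measureReal_generalizationGap_ge_le hm
    (fun S z => meanLoss_mem_Icc hn (hbound S z)) (fun S => (hint S).const_mul _)
    (hfresh.const_mul _) (fun j => (htrain j).const_mul _) (hgap ▸ hmeas) hε
  rw [hgap] at htail
  rw [← ofReal_measureReal]
  convert ENNReal.ofReal_le_ofReal htail using 6
  ring

/-- **Equation (5) in the proof of Theorem 3 (exponential tail bound).**
If `G` is a symmetric learning algorithm with function stability `Δbar` with
respect to removal of a sample, the point-wise cost `cτ` is `τ`-smooth, and
`0 ≤ ℓτ(G_S, z, k) ≤ γ` with `γ > 0`, then for `S` drawn i.i.d. of size `m`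
from `D` and every `ε > 0`,
`P_S(R(G_S) − R_e(G_S) ≥ 2τΔbar + ε) ≤ exp(−2mε²/((4m−2)τΔbar + γ)²)`. -/
theorem generalization_gap_tail_bound
    {X : Type*} [MeasurableSpace X] {n m : ℕ} (hn : 0 < n) (hm : 0 < m)
    (D : Measure (X × (Fin n → ℝ))) [IsProbabilityMeasure D]
    (G : (Fin m → X × (Fin n → ℝ)) → X → Fin n → ℝ)
    (Gminus : (Fin m → X × (Fin n → ℝ)) → Fin m → X → Fin n → ℝ)
    (cτ : ℝ → ℝ → ℝ) (τ Δbar : ℝ)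
    (hGminus : ∀ (S : Fin m → X × (Fin n → ℝ)) (i : Fin m) (z : X × (Fin n → ℝ)),
      Gminus (Function.update S i z) i = Gminus S i)
    (hstab : ∀ (S : Fin m → X × (Fin n → ℝ)) (i : Fin m) (x : X) (k : Fin n),
      |G S x k - Gminus S i x k| ≤ Δbar)
    (hsmooth : ∀ y₁ y₂ ystar : ℝ, |cτ y₁ ystar - cτ y₂ ystar| ≤ τ * |y₁ - y₂|)
    (hsym : ∀ (S : Fin m → X × (Fin n → ℝ)) (σ : Equiv.Perm (Fin m)), G (S ∘ σ) = G S)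
    (γ : ℝ) (hγ : 0 < γ)
    (hbound : ∀ (S : Fin m → X × (Fin n → ℝ)) (z : X × (Fin n → ℝ)) (k : Fin n),
      0 ≤ cτ (G S z.1 k) (z.2 k) ∧ cτ (G S z.1 k) (z.2 k) ≤ γ)
    (hIntG : ∀ S : Fin m → X × (Fin n → ℝ),
      Integrable (fun z => sampleLoss cτ (G S) z) D)
    (hIntGm : ∀ (S : Fin m → X × (Fin n → ℝ)) (i : Fin m),
      Integrable (fun z => sampleLoss cτ (Gminus S i) z) D)
    (hInt1 : Integrable
      (fun p : (Fin m → X × (Fin n → ℝ)) × (X × (Fin n → ℝ)) =>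
        sampleLoss cτ (G p.1) p.2)
      ((Measure.pi fun _ : Fin m => D).prod D))
    (hInt2 : ∀ i : Fin m, Integrable
      (fun p : (Fin m → X × (Fin n → ℝ)) × (X × (Fin n → ℝ)) =>
        sampleLoss cτ (G (Function.update p.1 i p.2)) p.2)
      ((Measure.pi fun _ : Fin m => D).prod D))
    (hInt3 : ∀ j : Fin m, Integrable
      (fun S : Fin m → X × (Fin n → ℝ) => sampleLoss cτ (G S) (S j))
      (Measure.pi fun _ : Fin m => D))
    (hIntR : Integrable
      (fun S : Fin m → X × (Fin n → ℝ) => genRisk D cτ (G S))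
      (Measure.pi fun _ : Fin m => D))
    (hmeas : Measurable
      (fun S : Fin m → X × (Fin n → ℝ) => genRisk D cτ (G S) - empRisk cτ (G S) S))
 :
    ∀ ε : ℝ, 0 < ε →
      (Measure.pi fun _ : Fin m => D)
          {S | 2 * τ * Δbar + ε ≤ genRisk D cτ (G S) - empRisk cτ (G S) S}
        ≤ ENNReal.ofReal
            (Real.exp (-(2 * (m : ℝ) * ε ^ 2) / ((4 * (m : ℝ) - 2) * τ * Δbar + γ) ^ 2)) := by
  exact fun ε hε => generalization_gap_tail_bound_general hn hm D G Gminus cτ τ Δbar γ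
    hGminus hstab hsmooth hbound hIntG hInt1 hInt3 hmeas hε.le
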